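/- In the max-variant with k = 2 facilities, for every odd m ≥ 3 and every ε ∈ (0, 1/m], the mechanism M_m((m−1)/(2m), (m+1)/(2m), (m+1)/(2m) + ε), which opens the facilities at the median representative location and the representative location directly to its right, has approximation ratio at most 4m²/(m²−1), and in particular at most 9/2, on every instance with m groups. -/

import Mathlib

open Finset

noncomputable section

/-- A distributed facility location setting for `k` facilities and `m` groups:
`n ≥ 2` agents on the real line, partitioned into `m ≥ k` disjoint nonempty groups. -/
structure FLSetting (k m : ℕ) where
  n : ℕ
  hn : 2 ≤ n
  hmk : k ≤ m
  grp : Fin n → Fin m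
  surj : Function.Surjective grp

/-- A two-phase mechanism for `k` facilities: for each number `m` of groups, a
representative function on finite multisets of reals, and a selection function
producing the `k` facility locations from the multiset of representatives. -/
structure TwoPhase (k : ℕ) where
  rep : ℕ → Multiset ℝ → ℝ
  sel : ℕ → Multiset ℝ → Fin k → ℝ

/-- Validity of a two-phase mechanism: the representative of a nonempty multiset
is one of its elements, and the selected facility locations form a sub-multiset
of the representatives. -/
def TwoPhase.Valid {k : ℕ} (M : TwoPhase k) : Prop :=
  (∀ (m : ℕ) (S : Multiset ℝ), S ≠ 0 → M.rep m S ∈ S) ∧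
  (∀ (m : ℕ) (R : Multiset ℝ), Multiset.card R = m → k ≤ m →
    (↑(List.ofFn (M.sel m R)) : Multiset ℝ) ≤ R)

/-- The multiset of (reported) positions of the agents in group `j`. -/
def groupMS {k m : ℕ} (S : FLSetting k m) (x : Fin S.n → ℝ) (j : Fin m) : Multiset ℝ :=
  (Finset.univ.filter (fun i => S.grp i = j)).val.map x

/-- The number of agents in group `j`. -/
def groupSize {k m : ℕ} (S : FLSetting k m) (j : Fin m) : ℕ :=
  (Finset.univ.filter (fun i => S.grp i = j)).card

/-- The multiset of the `m` group representatives. -/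
def repsMS {k m : ℕ} (M : TwoPhase k) (S : FLSetting k m) (x : Fin S.n → ℝ) : Multiset ℝ :=
  (Finset.univ.val.map fun j : Fin m => M.rep m (groupMS S x j))

/-- The facility locations output by mechanism `M` on reported positions `x`. -/
def outcome {k m : ℕ} (M : TwoPhase k) (S : FLSetting k m) (x : Fin S.n → ℝ) : Fin k → ℝ :=
  M.sel m (repsMS M S x)

/-- Sum-variant individual cost: total distance to all facilities. -/
def sumCost (k : ℕ) (xi : ℝ) (y : Fin k → ℝ) : ℝ := ∑ ℓ, |xi - y ℓ|

/-- Max-variant individual cost: distance to the farthest facility. -/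
def maxCost (k : ℕ) (xi : ℝ) (y : Fin k → ℝ) : ℝ := ⨆ ℓ, |xi - y ℓ|

/-- Social cost: average over groups of the average individual cost within the group. -/
def SC {k m : ℕ} (cost : ℝ → (Fin k → ℝ) → ℝ) (S : FLSetting k m) (x : Fin S.n → ℝ)
    (y : Fin k → ℝ) : ℝ :=
  (1 / (m : ℝ)) * ∑ j : Fin m,
    (1 / (groupSize S j : ℝ)) *
      ∑ i ∈ Finset.univ.filter (fun i => S.grp i = j), cost (x i) y

/-- A feasible solution opens the `k` facilities at the positions of `k` distinct agents. -/
def Feasible {k m : ℕ} (S : FLSetting k m) (x : Fin S.n → ℝ) (y : Fin k → ℝ) : Prop :=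
  ∃ f : Fin k → Fin S.n, Function.Injective f ∧ ∀ ℓ, y ℓ = x (f ℓ)

/-- Strategyproofness with respect to an individual cost function. -/
def Strategyproof {k : ℕ} (cost : ℝ → (Fin k → ℝ) → ℝ) (M : TwoPhase k) : Prop :=
  ∀ (m : ℕ) (S : FLSetting k m) (x : Fin S.n → ℝ) (i : Fin S.n) (x' : ℝ),
    cost (x i) (outcome M S x) ≤ cost (x i) (outcome M S (Function.update x i x'))

/-- Strategyproofness restricted to instances with exactly `m` groups. -/
def StrategyproofOn {k : ℕ} (cost : ℝ → (Fin k → ℝ) → ℝ) (M : TwoPhase k) (m : ℕ) : Prop :=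
  ∀ (S : FLSetting k m) (x : Fin S.n → ℝ) (i : Fin S.n) (x' : ℝ),
    cost (x i) (outcome M S x) ≤ cost (x i) (outcome M S (Function.update x i x'))

/-- The `t`-th leftmost element of a multiset of reals (1-indexed). -/
def kthLeftmost (S : Multiset ℝ) (t : ℕ) : ℝ := (S.sort (· ≤ ·)).getD (t - 1) 0

/-- The mechanism `M_m(θ, ℓ, r)` for two facilities: each group's representative is the
position of its `⌈θ·n_g⌉`-th leftmost agent, and the facilities are opened at the
`⌈ℓm⌉`-th and `⌈rm⌉`-th leftmost representative locations. -/
def Mmech (θ l r : ℝ) : TwoPhase 2 where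
  rep := fun _ S => kthLeftmost S ⌈θ * (Multiset.card S : ℝ)⌉₊
  sel := fun m R => ![kthLeftmost R ⌈l * (m : ℝ)⌉₊, kthLeftmost R ⌈r * (m : ℝ)⌉₊]

/-!
Let the facilities lie in `[a, b]`, let `c` be any point, and put `u = (c - a)⁺`, `v = (b - c)⁺`.
An agent at distance `d` from `c` is at distance at most `d + u + v` from every facility; agents
left of `a` save the term `u`, agents right of `b` save the term `v`, and the total saving of an
agent never exceeds `d`. If the agents on either side weigh at least `1 / α`, then `1 ≤ α` and the
average saving `T` satisfies `u + v ≤ α T` and `T ≤ D`, where `D` is the average of `d`, so the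
social cost is at most `D - T + (u + v) ≤ α (D - T) + α T = α D`. Taking `c` to be one of the
competing facilities bounds the approximation ratio by `α`.

For the mechanism, at least `⌈ℓm⌉` representatives lie weakly left of the first facility, and a
`θ`-fraction of each of their groups lies weakly left of them; likewise at least `m + 1 - ⌈rm⌉`
representatives, and a `(1 - θ)`-fraction of each of their groups, lie weakly right of the second
one. With `m = 2p + 1` both weights are at least `p (p + 1) / m² = (m² - 1) / (4 m²)`.
-/

section SortedList

variable {β : Type*} [Preorder β] [DecidableLE β] {L : List β} {i : ℕ}

lemma lt_countP_le_getElem (hL : L.SortedLE) (hi : i < L.length) :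
    i < L.countP (· ≤ L[i]) := by
  have hle : ∀ a ∈ L.take (i + 1), a ≤ L[i] := fun a ha => by
    obtain ⟨j, hj, rfl⟩ := List.getElem_of_mem ha
    rw [List.length_take] at hj
    rw [List.getElem_take]
    exact hL.getElem_le_getElem_of_le (by omega)
  calc i < (L.take (i + 1)).length := by rw [List.length_take]; omega
    _ = (L.take (i + 1)).countP (· ≤ L[i]) :=
        (List.countP_eq_length.2 (by simpa only [decide_eq_true_eq] using hle)).symm
    _ ≤ L.countP (· ≤ L[i]) := (List.take_sublist _ _).countP_le

lemma length_le_countP_getElem_le_add (hL : L.SortedLE) (hi : i < L.length) :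
    L.length ≤ L.countP (L[i] ≤ ·) + i := by
  have hge : ∀ a ∈ L.drop i, L[i] ≤ a := fun a ha => by
    obtain ⟨j, hj, rfl⟩ := List.getElem_of_mem ha
    rw [List.getElem_drop]
    exact hL.getElem_le_getElem_of_le (by omega)
  calc L.length = (L.drop i).length + i := by rw [List.length_drop]; omega
    _ = (L.drop i).countP (L[i] ≤ ·) + i := by
        rw [List.countP_eq_length.2 (by simpa only [decide_eq_true_eq] using hge)]
    _ ≤ L.countP (L[i] ≤ ·) + i := by gcongr; exact (List.drop_sublist _ _).countP_le

end SortedList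

section KthLeftmost

lemma kthLeftmost_add_one {S : Multiset ℝ} {i : ℕ} (hi : i < (S.sort (· ≤ ·)).length) :
    kthLeftmost S (i + 1) = (S.sort (· ≤ ·))[i] :=
  List.getD_eq_getElem _ _ hi

lemma kthLeftmost_le_kthLeftmost {S : Multiset ℝ} {s t : ℕ} (hs : 1 ≤ s) (hst : s ≤ t)
    (ht : t ≤ S.card) : kthLeftmost S s ≤ kthLeftmost S t := by
  obtain ⟨i, rfl⟩ := Nat.exists_eq_add_of_le' hs
  obtain ⟨j, rfl⟩ := Nat.exists_eq_add_of_le' (hs.trans hst)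
  rw [← S.length_sort (· ≤ ·)] at ht
  rw [kthLeftmost_add_one (by omega), kthLeftmost_add_one (by omega)]
  exact (S.pairwise_sort (· ≤ ·)).sortedLE.getElem_le_getElem_of_le (by omega)

lemma le_countP_le_kthLeftmost {S : Multiset ℝ} {t : ℕ} (ht : t ≤ S.card) :
    t ≤ S.countP (· ≤ kthLeftmost S t) := by
  obtain _ | i := t
  · exact Nat.zero_le _
  rw [← S.length_sort (· ≤ ·)] at ht
  have h := lt_countP_le_getElem (S.pairwise_sort (· ≤ ·)).sortedLE ht
  rwa [← kthLeftmost_add_one ht, ← Multiset.coe_countP, S.sort_eq] at h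

lemma card_lt_countP_kthLeftmost_le_add {S : Multiset ℝ} {t : ℕ} (ht₁ : 1 ≤ t)
    (ht : t ≤ S.card) : S.card < S.countP (kthLeftmost S t ≤ ·) + t := by
  obtain ⟨i, rfl⟩ := Nat.exists_eq_add_of_le' ht₁
  rw [← S.length_sort (· ≤ ·)] at ht
  have h := length_le_countP_getElem_le_add (S.pairwise_sort (· ≤ ·)).sortedLE ht
  rw [← kthLeftmost_add_one ht, ← Multiset.coe_countP, S.sort_eq, S.length_sort] at h
  exact Nat.lt_add_one_of_le h

variable {ι : Type*} {s : Finset ι} {f : ι → ℝ} {t : ℕ} {θ : ℝ}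

lemma le_card_filter_le_kthLeftmost (ht : t ≤ #s) :
    t ≤ #{i ∈ s | f i ≤ kthLeftmost (s.val.map f) t} := by
  have h := le_countP_le_kthLeftmost (S := s.val.map f) (t := t) (by rwa [Multiset.card_map])
  rwa [Multiset.countP_map] at h

lemma card_lt_card_filter_kthLeftmost_le_add (ht₁ : 1 ≤ t) (ht : t ≤ #s) :
    #s < #{i ∈ s | kthLeftmost (s.val.map f) t ≤ f i} + t := by
  have h := card_lt_countP_kthLeftmost_le_add (S := s.val.map f) ht₁ (by rwa [Multiset.card_map])
  rwa [Multiset.countP_map, Multiset.card_map] at h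

lemma ceil_mul_natCast_le (hθ : θ ≤ 1) (n : ℕ) : ⌈θ * n⌉₊ ≤ n :=
  Nat.ceil_le.2 (mul_le_of_le_one_left n.cast_nonneg hθ)

lemma mul_card_le_card_filter_le_kthLeftmost (hθ : θ ≤ 1) :
    θ * #s ≤ #{i ∈ s | f i ≤ kthLeftmost (s.val.map f) ⌈θ * #s⌉₊} :=
  (Nat.le_ceil _).trans
    (Nat.cast_le.2 (le_card_filter_le_kthLeftmost (ceil_mul_natCast_le hθ _)))

lemma one_sub_mul_card_le_card_filter_kthLeftmost_le (hs : s.Nonempty) (hθ₀ : 0 < θ)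
    (hθ : θ ≤ 1) :
    (1 - θ) * #s ≤ #{i ∈ s | kthLeftmost (s.val.map f) ⌈θ * #s⌉₊ ≤ f i} := by
  have hpos : 0 < θ * #s := mul_pos hθ₀ (Nat.cast_pos.2 hs.card_pos)
  have hcount := card_lt_card_filter_kthLeftmost_le_add (f := f) (Nat.ceil_pos.2 hpos)
    (ceil_mul_natCast_le hθ #s)
  rw [← Nat.add_one_le_iff, ← Nat.cast_le (α := ℝ)] at hcount
  push_cast at hcount
  linarith [Nat.ceil_lt_add_one hpos.le]

end KthLeftmost

section GroupAverage

open scoped BigOperators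

variable {k m : ℕ} (S : FLSetting k m)

/-- The set of agents in group `j`, over which averages and counts within the group are taken. -/
def members (j : Fin m) : Finset (Fin S.n) := {i | S.grp i = j}

lemma members_nonempty (j : Fin m) : (members S j).Nonempty := by
  obtain ⟨i, hi⟩ := S.surj j
  exact ⟨i, by simpa only [members, mem_filter_univ] using hi⟩

/-- The average over the groups of the average of `f` within each group, so that the social cost
is the group average of the individual costs. -/
def groupAvg (f : Fin S.n → ℝ) : ℝ := 𝔼 j, 𝔼 i ∈ members S j, f i

/-- The weight of the agents satisfying `P`: the average over the groups of the fraction of their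
members that satisfy `P`. -/
def groupFrac (P : Fin S.n → Prop) [DecidablePred P] : ℝ :=
  groupAvg S fun i => if P i then 1 else 0

variable {S}

lemma SC_eq_groupAvg (cost : ℝ → (Fin k → ℝ) → ℝ) (x : Fin S.n → ℝ) (y : Fin k → ℝ) :
    SC cost S x y = groupAvg S fun i => cost (x i) y := by
  simp only [SC, groupAvg, groupSize, members, expect_eq_sum_div_card, card_univ,
    Fintype.card_fin, one_div, inv_mul_eq_div]

lemma groupAvg_mono {f g : Fin S.n → ℝ} (h : ∀ i, f i ≤ g i) : groupAvg S f ≤ groupAvg S g :=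
  expect_le_expect fun _ _ => expect_le_expect fun i _ => h i

lemma groupAvg_nonneg {f : Fin S.n → ℝ} (h : ∀ i, 0 ≤ f i) : 0 ≤ groupAvg S f :=
  expect_nonneg fun _ _ => expect_nonneg fun i _ => h i

lemma groupAvg_add (f g : Fin S.n → ℝ) :
    groupAvg S (fun i => f i + g i) = groupAvg S f + groupAvg S g := by
  simp only [groupAvg, expect_add_distrib]

lemma groupAvg_const_mul (a : ℝ) (f : Fin S.n → ℝ) :
    groupAvg S (fun i => a * f i) = a * groupAvg S f := by
  simp only [groupAvg, mul_expect]

lemma groupAvg_const (a : ℝ) : groupAvg S (fun _ => a) = a := by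
  have hgroups : (univ : Finset (Fin m)).Nonempty := ⟨S.grp ⟨0, by have := S.hn; omega⟩, mem_univ _⟩
  simp only [groupAvg, expect_const (members_nonempty S _), expect_const hgroups]

variable (P : Fin S.n → Prop) [DecidablePred P]

lemma groupFrac_nonneg : 0 ≤ groupFrac S P :=
  groupAvg_nonneg fun _ => ite_nonneg zero_le_one le_rfl

lemma groupFrac_le_one : groupFrac S P ≤ 1 := by
  rw [← groupAvg_const (S := S) 1]
  exact groupAvg_mono fun i => ite_le_one le_rfl zero_le_one

lemma groupFrac_eq_sum_div :
    groupFrac S P = (∑ j, (#{i ∈ members S j | P i} : ℝ) / #(members S j)) / m := by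
  simp only [groupFrac, groupAvg, expect_eq_sum_div_card, sum_boole, card_univ, Fintype.card_fin]

lemma mul_card_div_le_groupFrac {q : ℝ} {J : Finset (Fin m)}
    (hJ : ∀ j ∈ J, q * #(members S j) ≤ #{i ∈ members S j | P i}) :
    q * (#J / m) ≤ groupFrac S P := by
  rw [groupFrac_eq_sum_div, mul_div_assoc', mul_comm, ← nsmul_eq_mul, ← sum_const]
  gcongr
  calc ∑ _j ∈ J, q ≤ ∑ j ∈ J, (#{i ∈ members S j | P i} : ℝ) / #(members S j) :=
        sum_le_sum fun j hj =>
          (le_div_iff₀ (Nat.cast_pos.2 (members_nonempty S j).card_pos)).2 (hJ j hj)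
    _ ≤ ∑ j, (#{i ∈ members S j | P i} : ℝ) / #(members S j) :=
        sum_le_univ_sum_of_nonneg fun j => by positivity

end GroupAverage

section FacilitiesInInterval

variable {a b c t z : ℝ}

lemma posPart_mul_add_posPart_mul_le_abs_sub :
    (c - a)⁺ * (if t ≤ a then 1 else 0) + (b - c)⁺ * (if b ≤ t then 1 else 0) ≤ |t - c| := by
  have hleft (h : t ≤ a) : (c - a)⁺ ≤ |t - c| :=
    sup_le (by linarith [neg_le_abs (t - c)]) (abs_nonneg _)
  have hright (h : b ≤ t) : (b - c)⁺ ≤ |t - c| :=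
    sup_le (by linarith [le_abs_self (t - c)]) (abs_nonneg _)
  split_ifs with hL hR hR
  · rcases le_total c a with hca | hac
    · simpa [posPart_eq_zero.2 (sub_nonpos.2 hca)] using hright hR
    · simpa [posPart_eq_zero.2 (sub_nonpos.2 ((hR.trans hL).trans hac))] using hleft hL
  · simpa using hleft hL
  · simpa using hright hR
  · simp

lemma abs_sub_add_posPart_mul_le (hz : z ∈ Set.Icc a b) :
    |t - z| + ((c - a)⁺ * (if t ≤ a then 1 else 0) + (b - c)⁺ * (if b ≤ t then 1 else 0))
      ≤ |t - c| + ((c - a)⁺ + (b - c)⁺) := by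
  obtain ⟨haz, hzb⟩ := hz
  have hu := le_posPart (c - a)
  have hv := le_posPart (b - c)
  have hd := le_abs_self (t - c)
  have hd' := neg_le_abs (t - c)
  rw [← le_sub_iff_add_le]
  split_ifs <;> exact abs_le'.2 ⟨by linarith, by linarith⟩

variable {k m : ℕ} {S : FLSetting k m} {x : Fin S.n → ℝ}

lemma abs_sub_le_maxCost (t : ℝ) (y : Fin k → ℝ) (ℓ : Fin k) : |t - y ℓ| ≤ maxCost k t y :=
  le_ciSup (f := fun ℓ => |t - y ℓ|) (Set.finite_range _).bddAbove ℓ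

lemma maxCost_nonneg (t : ℝ) (y : Fin k → ℝ) : 0 ≤ maxCost k t y :=
  Real.iSup_nonneg fun _ => abs_nonneg _

lemma maxCost_add_posPart_mul_le {w : Fin k → ℝ} (hw : ∀ ℓ, w ℓ ∈ Set.Icc a b) :
    maxCost k t w
        + ((c - a)⁺ * (if t ≤ a then 1 else 0) + (b - c)⁺ * (if b ≤ t then 1 else 0))
      ≤ |t - c| + ((c - a)⁺ + (b - c)⁺) := by
  rw [← le_sub_iff_add_le]
  refine Real.iSup_le (fun ℓ => le_sub_iff_add_le.2 (abs_sub_add_posPart_mul_le (hw ℓ))) ?_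
  linarith [posPart_mul_add_posPart_mul_le_abs_sub (a := a) (b := b) (c := c) (t := t),
    posPart_nonneg (c - a), posPart_nonneg (b - c)]

lemma SC_maxCost_le_mul_groupAvg_abs_sub {w : Fin k → ℝ} (hw : ∀ ℓ, w ℓ ∈ Set.Icc a b)
    {α : ℝ} (hleft : 1 ≤ α * groupFrac S (x · ≤ a))
    (hright : 1 ≤ α * groupFrac S (b ≤ x ·)) (c : ℝ) :
    SC (maxCost k) S x w ≤ α * groupAvg S fun i => |x i - c| := by
  set D := groupAvg S fun i => |x i - c|
  set u := (c - a)⁺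
  set v := (b - c)⁺
  set T := u * groupFrac S (x · ≤ a) + v * groupFrac S (b ≤ x ·) with hT
  have hα : 0 ≤ α := (pos_of_mul_pos_left (zero_lt_one.trans_le hleft) (groupFrac_nonneg _)).le
  have hα₁ : 1 ≤ α := hleft.trans (mul_le_of_le_one_right hα (groupFrac_le_one _))
  have hTavg : groupAvg S (fun i => u * (if x i ≤ a then 1 else 0)
      + v * (if b ≤ x i then 1 else 0)) = T := by
    rw [groupAvg_add, groupAvg_const_mul, groupAvg_const_mul]; rfl
  have hTD : T ≤ D := by
    rw [← hTavg]
    exact groupAvg_mono fun i => posPart_mul_add_posPart_mul_le_abs_sub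
  have hcost : SC (maxCost k) S x w + T ≤ D + (u + v) := by
    rw [SC_eq_groupAvg, ← hTavg, ← groupAvg_add, ← groupAvg_const (S := S) (u + v), ← groupAvg_add]
    exact groupAvg_mono fun i => maxCost_add_posPart_mul_le hw
  have huv : u + v ≤ α * T := by
    rw [hT]
    linarith [mul_le_mul_of_nonneg_left hleft (posPart_nonneg (c - a)),
      mul_le_mul_of_nonneg_left hright (posPart_nonneg (b - c))]
  calc SC (maxCost k) S x w ≤ 1 * (D - T) + (u + v) := by linarith
    _ ≤ α * (D - T) + α * T := by gcongr
    _ = α * D := by ring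

lemma groupAvg_abs_sub_le_SC_maxCost (y : Fin k → ℝ) (ℓ : Fin k) :
    (groupAvg S fun i => |x i - y ℓ|) ≤ SC (maxCost k) S x y := by
  rw [SC_eq_groupAvg]
  exact groupAvg_mono fun i => abs_sub_le_maxCost (x i) y ℓ

lemma SC_maxCost_nonneg (y : Fin k → ℝ) : 0 ≤ SC (maxCost k) S x y := by
  rw [SC_eq_groupAvg]
  exact groupAvg_nonneg fun i => maxCost_nonneg (x i) y

end FacilitiesInInterval

section Mechanism

variable {m : ℕ} {S : FLSetting 2 m} {x : Fin S.n → ℝ} {θ l r : ℝ}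

/-- The representative of group `j` under `M_m(θ, ℓ, r)`, with the group given by `members S j`
instead of its multiset of positions, so that the counting lemmas over finsets apply to it. -/
def representative (θ : ℝ) (S : FLSetting 2 m) (x : Fin S.n → ℝ) (j : Fin m) : ℝ :=
  kthLeftmost ((members S j).val.map x) ⌈θ * #(members S j)⌉₊

lemma Mmech_rep_groupMS (j : Fin m) :
    (Mmech θ l r).rep m (groupMS S x j) = representative θ S x j := by
  simp only [Mmech, groupMS, representative, members, Multiset.card_map, card_val]

lemma outcome_Mmech :
    outcome (Mmech θ l r) S x = ![kthLeftmost (univ.val.map (representative θ S x)) ⌈l * m⌉₊,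
      kthLeftmost (univ.val.map (representative θ S x)) ⌈r * m⌉₊] := by
  simp only [outcome, repsMS, Mmech_rep_groupMS]
  rfl

lemma outcome_Mmech_zero_le_one (hl : 0 < l) (hlr : l ≤ r) (hr : r ≤ 1) :
    outcome (Mmech θ l r) S x 0 ≤ outcome (Mmech θ l r) S x 1 := by
  have hm : (0 : ℝ) < m := Nat.cast_pos.2 (two_pos.trans_le S.hmk)
  refine kthLeftmost_le_kthLeftmost (Nat.ceil_pos.2 (by positivity)) (by gcongr) ?_
  simpa only [repsMS, Multiset.card_map, card_val, card_univ, Fintype.card_fin]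
    using ceil_mul_natCast_le hr m

lemma mul_ceil_div_le_groupFrac_le_outcome (hθ₀ : 0 ≤ θ) (hθ : θ ≤ 1) (hl : l ≤ 1) :
    θ * (⌈l * m⌉₊ / m) ≤ groupFrac S (x · ≤ outcome (Mmech θ l r) S x 0) := by
  set w := outcome (Mmech θ l r) S x 0 with hw
  have hreps : ⌈l * m⌉₊ ≤ #{j | representative θ S x j ≤ w} := by
    rw [hw, outcome_Mmech]
    exact le_card_filter_le_kthLeftmost (by simpa using ceil_mul_natCast_le hl m)
  calc θ * (⌈l * m⌉₊ / m) ≤ θ * (#{j | representative θ S x j ≤ w} / m) := by gcongr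
    _ ≤ groupFrac S (x · ≤ w) := mul_card_div_le_groupFrac _ fun j hj =>
        (mul_card_le_card_filter_le_kthLeftmost (f := x) hθ).trans <| Nat.cast_le.2 <|
          card_le_card <| monotone_filter_right _ fun _ _ hi => hi.trans (mem_filter_univ j |>.1 hj)

lemma one_sub_mul_ceil_div_le_groupFrac_outcome_le (hθ₀ : 0 < θ) (hθ : θ ≤ 1) (hr₀ : 0 < r)
    (hr : r ≤ 1) :
    (1 - θ) * ((m + 1 - ⌈r * m⌉₊) / m) ≤ groupFrac S (outcome (Mmech θ l r) S x 1 ≤ x ·) := by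
  set w := outcome (Mmech θ l r) S x 1 with hw
  have hm : (0 : ℝ) < m := Nat.cast_pos.2 (two_pos.trans_le S.hmk)
  have hreps : (m + 1 - ⌈r * m⌉₊ : ℝ) ≤ #{j | w ≤ representative θ S x j} := by
    have hcount := card_lt_card_filter_kthLeftmost_le_add (s := univ)
      (f := representative θ S x) (Nat.ceil_pos.2 (mul_pos hr₀ hm))
      (by simpa using ceil_mul_natCast_le hr m)
    rw [card_fin, ← Nat.add_one_le_iff] at hcount
    rw [hw, outcome_Mmech, sub_le_iff_le_add]
    exact_mod_cast hcount
  calc (1 - θ) * ((m + 1 - ⌈r * m⌉₊) / m)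
      ≤ (1 - θ) * (#{j | w ≤ representative θ S x j} / m) := by gcongr
    _ ≤ groupFrac S (w ≤ x ·) := mul_card_div_le_groupFrac _ fun j hj =>
        (one_sub_mul_card_le_card_filter_kthLeftmost_le (f := x) (members_nonempty S j) hθ₀
          hθ).trans <| Nat.cast_le.2 <| card_le_card <| monotone_filter_right _
            fun _ _ hi => (mem_filter_univ j |>.1 hj).trans hi

theorem SC_outcome_Mmech_le_mul_SC (hθ₀ : 0 < θ) (hθ : θ ≤ 1) (hl : 0 < l) (hlr : l ≤ r)
    (hr : r ≤ 1) {α : ℝ} (hleft : 1 ≤ α * (θ * (⌈l * m⌉₊ / m)))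
    (hright : 1 ≤ α * ((1 - θ) * ((m + 1 - ⌈r * m⌉₊) / m))) (y : Fin 2 → ℝ) :
    SC (maxCost 2) S x (outcome (Mmech θ l r) S x) ≤ α * SC (maxCost 2) S x y := by
  have hα : 0 ≤ α := (pos_of_mul_pos_left (zero_lt_one.trans_le hleft) (by positivity)).le
  have hordered := outcome_Mmech_zero_le_one (θ := θ) (S := S) (x := x) hl hlr hr
  have hmem : ∀ ℓ, outcome (Mmech θ l r) S x ℓ ∈
      Set.Icc (outcome (Mmech θ l r) S x 0) (outcome (Mmech θ l r) S x 1) :=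
    Fin.forall_fin_two.2 ⟨Set.left_mem_Icc.2 hordered, Set.right_mem_Icc.2 hordered⟩
  calc SC (maxCost 2) S x (outcome (Mmech θ l r) S x)
      ≤ α * groupAvg S fun i => |x i - y 0| := by
        refine SC_maxCost_le_mul_groupAvg_abs_sub hmem (hleft.trans ?_) (hright.trans ?_) _
        · gcongr
          exact mul_ceil_div_le_groupFrac_le_outcome hθ₀.le hθ (hlr.trans hr)
        · gcongr
          exact one_sub_mul_ceil_div_le_groupFrac_outcome_le hθ₀ hθ (hl.trans_le hlr) hr
    _ ≤ α * SC (maxCost 2) S x y := by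
        gcongr
        exact groupAvg_abs_sub_le_SC_maxCost y 0

end Mechanism

lemma ceil_add_one_div_two_mul_self {m p : ℕ} (hm : m = 2 * p + 1) :
    ⌈((m : ℝ) + 1) / (2 * m) * m⌉₊ = p + 1 := by
  have hmid : ((m : ℝ) + 1) / (2 * m) * m = (p + 1 : ℕ) := by
    subst hm
    push_cast
    field_simp
    ring
  rw [hmid, Nat.ceil_natCast]

lemma ceil_add_one_div_two_mul_self_add {m p : ℕ} (hm : m = 2 * p + 1) {ε : ℝ}
    (hε : ε ∈ Set.Ioc (0 : ℝ) (1 / m)) :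
    ⌈(((m : ℝ) + 1) / (2 * m) + ε) * m⌉₊ = p + 2 := by
  have hm₀ : (0 : ℝ) < m := by rw [hm]; positivity
  have hmid : (((m : ℝ) + 1) / (2 * m) + ε) * m = p + 1 + ε * m := by
    rw [add_mul, hm]
    push_cast
    field_simp
    ring
  have hpos : 0 < ε * m := mul_pos hε.1 hm₀
  have hle : ε * m ≤ 1 := (le_div_iff₀ hm₀).1 hε.2
  rw [hmid, Nat.ceil_eq_iff (by omega)]
  push_cast [Nat.add_sub_assoc]
  constructor <;> linarith

theorem stmt10_general (m : ℕ) (hmodd : Odd m) (ε : ℝ) (hε : ε ∈ Set.Ioc (0 : ℝ) (1 / (m : ℝ)))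
    (S : FLSetting 2 m) (x : Fin S.n → ℝ) (y : Fin 2 → ℝ) :
    SC (maxCost 2) S x
        (outcome (Mmech (((m : ℝ) - 1) / (2 * m)) (((m : ℝ) + 1) / (2 * m))
          (((m : ℝ) + 1) / (2 * m) + ε)) S x)
      ≤ (4 * (m : ℝ) ^ 2 / ((m : ℝ) ^ 2 - 1)) * SC (maxCost 2) S x y ∧
    SC (maxCost 2) S x
        (outcome (Mmech (((m : ℝ) - 1) / (2 * m)) (((m : ℝ) + 1) / (2 * m))
          (((m : ℝ) + 1) / (2 * m) + ε)) S x)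
      ≤ (9 / 2) * SC (maxCost 2) S x y := by
  obtain ⟨p, hp⟩ := hmodd
  have hm : (3 : ℝ) ≤ m := by have := S.hmk; exact_mod_cast (by omega : 3 ≤ m)
  have hmp : (m : ℝ) = 2 * p + 1 := by exact_mod_cast hp
  have hden : 0 < (m : ℝ) ^ 2 - 1 := by nlinarith
  have hθ₀ : 0 < ((m : ℝ) - 1) / (2 * m) := div_pos (by linarith) (by linarith)
  have hθ₁ : ((m : ℝ) - 1) / (2 * m) ≤ 1 := div_le_one_of_le₀ (by linarith) (by linarith)
  have hθ : ((m : ℝ) - 1) / (2 * m) = p / m := by field_simp; linarith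
  have hθ' : 1 - (p : ℝ) / m = (p + 1) / m := by field_simp; linarith
  have hr : ((m : ℝ) + 1) / (2 * m) + ε ≤ 1 := by
    have : ((m : ℝ) + 1) / (2 * m) + 1 / m ≤ 1 := by field_simp; linarith
    linarith [hε.2]
  have hweight : 4 * (m : ℝ) ^ 2 / ((m : ℝ) ^ 2 - 1) * (p / m * ((p + 1) / m)) = 1 := by
    field_simp
    rw [hmp]
    ring
  have hbound : 4 * (m : ℝ) ^ 2 / ((m : ℝ) ^ 2 - 1) ≤ 9 / 2 := by
    rw [div_le_iff₀ hden]
    nlinarith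
  refine (and_iff_left_of_imp fun hratio =>
    hratio.trans (mul_le_mul_of_nonneg_right hbound (SC_maxCost_nonneg y))).2 ?_
  refine SC_outcome_Mmech_le_mul_SC hθ₀ hθ₁ (by positivity) (by linarith [hε.1]) hr ?_ ?_ y
  · rw [ceil_add_one_div_two_mul_self hp, hθ, Nat.cast_add_one, hweight]
  · have hright : (m : ℝ) + 1 - (p + 2 : ℕ) = p := by push_cast; linarith
    rw [ceil_add_one_div_two_mul_self_add hp hε, hθ, hθ', hright, mul_comm (_ / _ : ℝ) (p / m),
      hweight]

/-- In the max-variant with two facilities, for every odd `m ≥ 3` and `ε ∈ (0, 1/m]`,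
the mechanism `M_m((m−1)/(2m), (m+1)/(2m), (m+1)/(2m)+ε)` has approximation ratio at most
`4m²/(m²−1)`, and in particular at most `9/2`. -/
theorem stmt10 (m : ℕ) (hm : 3 ≤ m) (hmodd : Odd m) (ε : ℝ)
    (hε : ε ∈ Set.Ioc (0 : ℝ) (1 / (m : ℝ)))
    (S : FLSetting 2 m) (x : Fin S.n → ℝ) (y : Fin 2 → ℝ) (hy : Feasible S x y) :
    SC (maxCost 2) S x
        (outcome (Mmech (((m : ℝ) - 1) / (2 * m)) (((m : ℝ) + 1) / (2 * m))
          (((m : ℝ) + 1) / (2 * m) + ε)) S x)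
      ≤ (4 * (m : ℝ) ^ 2 / ((m : ℝ) ^ 2 - 1)) * SC (maxCost 2) S x y ∧
    SC (maxCost 2) S x
        (outcome (Mmech (((m : ℝ) - 1) / (2 * m)) (((m : ℝ) + 1) / (2 * m))
          (((m : ℝ) + 1) / (2 * m) + ε)) S x)
      ≤ (9 / 2) * SC (maxCost 2) S x y :=
  stmt10_general m hmodd ε hε S x y

end
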